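/- Let h be a real-valued C^2 function on an open subset of ℝ², and for w > 0 let E = (1 + h_u²)/w², F = (h_u(w·h_w − h) − u)/w³, G = (1 + u² + (w·h_w − h)²)/w⁴ be the first fundamental form coefficients of the end chart α(u,w) = (u/w, h(u,w)/w, 1/w). Define N₁(u,w) = w·h_ww·(h_u(w·h_w − h) − u) − (1 + u² + (w·h_w − h)²)·h_uw, N₂(u,w) = w²(1 + h_u²)·h_ww − (1 + u² + (w·h_w − h)²)·h_uu, and N₃(u,w) = w(1 + h_u²)·h_uw − (h_u(w·h_w − h) − u)·h_uu. Then for all w > 0 the identities w⁴(F·h_ww − G·h_uw) = N₁, w⁴(E·h_ww − G·h_uu) = N₂, and w³(E·h_uw − F·h_uu) = N₃ hold; moreover N₁, N₂, N₃ are defined and continuous on the whole domain including w = 0, and if h(0,0) = 0 and h_u(0,0) = 0 then N₁(0,0) = −h_uw(0,0), N₂(0,0) = −h_uu(0,0), and N₃(0,0) = 0. -/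

import Mathlib

noncomputable section

/-- Partial derivative with respect to the first variable. -/
def pdu (f : ℝ × ℝ → ℝ) (p : ℝ × ℝ) : ℝ := fderiv ℝ f p (1, 0)

/-- Partial derivative with respect to the second variable. -/
def pdw (f : ℝ × ℝ → ℝ) (p : ℝ × ℝ) : ℝ := fderiv ℝ f p (0, 1)

/-- Coefficient `N₁` of the extended curvature-line equation of the end chart. -/
def N1 (h : ℝ × ℝ → ℝ) (p : ℝ × ℝ) : ℝ :=
  p.2 * pdw (pdw h) p * (pdu h p * (p.2 * pdw h p - h p) - p.1)
    - (1 + p.1 ^ 2 + (p.2 * pdw h p - h p) ^ 2) * pdw (pdu h) p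

/-- Coefficient `N₂` of the extended curvature-line equation of the end chart. -/
def N2 (h : ℝ × ℝ → ℝ) (p : ℝ × ℝ) : ℝ :=
  p.2 ^ 2 * (1 + (pdu h p) ^ 2) * pdw (pdw h) p
    - (1 + p.1 ^ 2 + (p.2 * pdw h p - h p) ^ 2) * pdu (pdu h) p

/-- Coefficient `N₃` of the extended curvature-line equation of the end chart. -/
def N3 (h : ℝ × ℝ → ℝ) (p : ℝ × ℝ) : ℝ :=
  p.2 * (1 + (pdu h p) ^ 2) * pdw (pdu h) p
    - (pdu h p * (p.2 * pdw h p - h p) - p.1) * pdu (pdu h) p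

/-- First fundamental form coefficient `E` of the end chart. -/
def EE (h : ℝ × ℝ → ℝ) (p : ℝ × ℝ) : ℝ := (1 + (pdu h p) ^ 2) / p.2 ^ 2

/-- First fundamental form coefficient `F` of the end chart. -/
def FF (h : ℝ × ℝ → ℝ) (p : ℝ × ℝ) : ℝ :=
  (pdu h p * (p.2 * pdw h p - h p) - p.1) / p.2 ^ 3

/-- First fundamental form coefficient `G` of the end chart. -/
def GG (h : ℝ × ℝ → ℝ) (p : ℝ × ℝ) : ℝ :=
  (1 + p.1 ^ 2 + (p.2 * pdw h p - h p) ^ 2) / p.2 ^ 4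

/-!
The metric coefficients have poles of orders 2, 3 and 4 along `w = 0`, and after clearing them
the numerators are polynomial in `u`, `w`, `h` and the first derivatives of `h`. Hence each `Nᵢ` is
polynomial in `u`, `w` and the derivatives of `h` of order at most two, so it loses at most
two degrees of smoothness, across `w = 0` as well as away from it.
-/

lemma contDiffOn_fderiv_apply_const {𝕜 E F : Type*} [NontriviallyNormedField 𝕜]
    [NormedAddCommGroup E] [NormedSpace 𝕜 E] [NormedAddCommGroup F] [NormedSpace 𝕜 F]
    {f : E → F} {U : Set E} {m n : WithTop ℕ∞} (hf : ContDiffOn 𝕜 n f U) (hU : IsOpen U)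
    (hmn : m + 1 ≤ n) (v : E) : ContDiffOn 𝕜 m (fun x ↦ fderiv 𝕜 f x v) U :=
  (hf.fderiv_of_isOpen hU hmn).clm_apply contDiffOn_const

section Smoothness

variable {U : Set (ℝ × ℝ)} {h : ℝ × ℝ → ℝ} {m n : WithTop ℕ∞}

lemma contDiffOn_pdu (hh : ContDiffOn ℝ n h U) (hU : IsOpen U) (hmn : m + 1 ≤ n) :
    ContDiffOn ℝ m (pdu h) U :=
  contDiffOn_fderiv_apply_const hh hU hmn (1, 0)

lemma contDiffOn_pdw (hh : ContDiffOn ℝ n h U) (hU : IsOpen U) (hmn : m + 1 ≤ n) :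
    ContDiffOn ℝ m (pdw h) U :=
  contDiffOn_fderiv_apply_const hh hU hmn (0, 1)

lemma contDiffOn_N1 (hh : ContDiffOn ℝ (m + 1 + 1) h U) (hU : IsOpen U) :
    ContDiffOn ℝ m (N1 h) U := by
  have h₀ : ContDiffOn ℝ m h U := hh.of_le (le_self_add.trans le_self_add)
  have hu : ContDiffOn ℝ m (pdu h) U := contDiffOn_pdu hh hU le_self_add
  have hw : ContDiffOn ℝ m (pdw h) U := contDiffOn_pdw hh hU le_self_add
  have huw : ContDiffOn ℝ m (pdw (pdu h)) U :=
    contDiffOn_pdw (contDiffOn_pdu hh hU le_rfl) hU le_rfl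
  have hww : ContDiffOn ℝ m (pdw (pdw h)) U :=
    contDiffOn_pdw (contDiffOn_pdw hh hU le_rfl) hU le_rfl
  unfold N1
  fun_prop

lemma contDiffOn_N2 (hh : ContDiffOn ℝ (m + 1 + 1) h U) (hU : IsOpen U) :
    ContDiffOn ℝ m (N2 h) U := by
  have h₀ : ContDiffOn ℝ m h U := hh.of_le (le_self_add.trans le_self_add)
  have hu : ContDiffOn ℝ m (pdu h) U := contDiffOn_pdu hh hU le_self_add
  have hw : ContDiffOn ℝ m (pdw h) U := contDiffOn_pdw hh hU le_self_add
  have huu : ContDiffOn ℝ m (pdu (pdu h)) U :=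
    contDiffOn_pdu (contDiffOn_pdu hh hU le_rfl) hU le_rfl
  have hww : ContDiffOn ℝ m (pdw (pdw h)) U :=
    contDiffOn_pdw (contDiffOn_pdw hh hU le_rfl) hU le_rfl
  unfold N2
  fun_prop

lemma contDiffOn_N3 (hh : ContDiffOn ℝ (m + 1 + 1) h U) (hU : IsOpen U) :
    ContDiffOn ℝ m (N3 h) U := by
  have h₀ : ContDiffOn ℝ m h U := hh.of_le (le_self_add.trans le_self_add)
  have hu : ContDiffOn ℝ m (pdu h) U := contDiffOn_pdu hh hU le_self_add
  have hw : ContDiffOn ℝ m (pdw h) U := contDiffOn_pdw hh hU le_self_add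
  have huu : ContDiffOn ℝ m (pdu (pdu h)) U :=
    contDiffOn_pdu (contDiffOn_pdu hh hU le_rfl) hU le_rfl
  have huw : ContDiffOn ℝ m (pdw (pdu h)) U :=
    contDiffOn_pdw (contDiffOn_pdu hh hU le_rfl) hU le_rfl
  unfold N3
  fun_prop

end Smoothness

section Rescaling

variable (h : ℝ × ℝ → ℝ) {p : ℝ × ℝ}

lemma sq_mul_EE (hp : p.2 ≠ 0) : p.2 ^ 2 * EE h p = 1 + pdu h p ^ 2 :=
  mul_div_cancel₀ _ (pow_ne_zero 2 hp)

lemma cube_mul_FF (hp : p.2 ≠ 0) :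
    p.2 ^ 3 * FF h p = pdu h p * (p.2 * pdw h p - h p) - p.1 :=
  mul_div_cancel₀ _ (pow_ne_zero 3 hp)

lemma pow_four_mul_GG (hp : p.2 ≠ 0) :
    p.2 ^ 4 * GG h p = 1 + p.1 ^ 2 + (p.2 * pdw h p - h p) ^ 2 :=
  mul_div_cancel₀ _ (pow_ne_zero 4 hp)

lemma pow_four_mul_FF_sub_GG_eq_N1 (hp : p.2 ≠ 0) :
    p.2 ^ 4 * (FF h p * pdw (pdw h) p - GG h p * pdw (pdu h) p) = N1 h p := by
  unfold N1
  linear_combination p.2 * pdw (pdw h) p * cube_mul_FF h hp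
    - pdw (pdu h) p * pow_four_mul_GG h hp

lemma pow_four_mul_EE_sub_GG_eq_N2 (hp : p.2 ≠ 0) :
    p.2 ^ 4 * (EE h p * pdw (pdw h) p - GG h p * pdu (pdu h) p) = N2 h p := by
  unfold N2
  linear_combination p.2 ^ 2 * pdw (pdw h) p * sq_mul_EE h hp
    - pdu (pdu h) p * pow_four_mul_GG h hp

lemma cube_mul_EE_sub_FF_eq_N3 (hp : p.2 ≠ 0) :
    p.2 ^ 3 * (EE h p * pdw (pdu h) p - FF h p * pdu (pdu h) p) = N3 h p := by
  unfold N3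
  linear_combination p.2 * pdw (pdu h) p * sq_mul_EE h hp
    - pdu (pdu h) p * cube_mul_FF h hp

end Rescaling

section EndLocus

variable (h : ℝ × ℝ → ℝ) (u : ℝ)

lemma N1_mk_zero : N1 h (u, 0) = -((1 + u ^ 2 + h (u, 0) ^ 2) * pdw (pdu h) (u, 0)) := by
  simp only [N1]
  ring

lemma N2_mk_zero : N2 h (u, 0) = -((1 + u ^ 2 + h (u, 0) ^ 2) * pdu (pdu h) (u, 0)) := by
  simp only [N2]
  ring

lemma N3_mk_zero : N3 h (u, 0) = (pdu h (u, 0) * h (u, 0) + u) * pdu (pdu h) (u, 0) := by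
  simp only [N3]
  ring

end EndLocus

theorem stmt_3_general {U : Set (ℝ × ℝ)} (hU : IsOpen U) {h : ℝ × ℝ → ℝ} {m : WithTop ℕ∞}
    (hh : ContDiffOn ℝ (m + 1 + 1) h U) :
    (∀ p ∈ U, p.2 ≠ 0 →
      p.2 ^ 4 * (FF h p * pdw (pdw h) p - GG h p * pdw (pdu h) p) = N1 h p ∧
      p.2 ^ 4 * (EE h p * pdw (pdw h) p - GG h p * pdu (pdu h) p) = N2 h p ∧
      p.2 ^ 3 * (EE h p * pdw (pdu h) p - FF h p * pdu (pdu h) p) = N3 h p) ∧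
    ContDiffOn ℝ m (N1 h) U ∧ ContDiffOn ℝ m (N2 h) U ∧ ContDiffOn ℝ m (N3 h) U ∧
    (∀ u : ℝ, (u, 0) ∈ U →
      N1 h (u, 0) = -((1 + u ^ 2 + h (u, 0) ^ 2) * pdw (pdu h) (u, 0)) ∧
      N2 h (u, 0) = -((1 + u ^ 2 + h (u, 0) ^ 2) * pdu (pdu h) (u, 0)) ∧
      N3 h (u, 0) = (pdu h (u, 0) * h (u, 0) + u) * pdu (pdu h) (u, 0)) :=
  ⟨fun _ _ hp ↦ ⟨pow_four_mul_FF_sub_GG_eq_N1 h hp, pow_four_mul_EE_sub_GG_eq_N2 h hp,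
      cube_mul_EE_sub_FF_eq_N3 h hp⟩,
    contDiffOn_N1 hh hU, contDiffOn_N2 hh hU, contDiffOn_N3 hh hU,
    fun u _ ↦ ⟨N1_mk_zero h u, N2_mk_zero h u, N3_mk_zero h u⟩⟩

/-- the rescaled coefficients of the curvature-line equation of the end chart
extend continuously across the end locus `{w = 0}`, with the stated values at the origin. -/
theorem stmt_3 (U : Set (ℝ × ℝ)) (hU : IsOpen U) (h : ℝ × ℝ → ℝ)
    (hh : ContDiffOn ℝ 2 h U) :
    (∀ p ∈ U, 0 < p.2 →
      p.2 ^ 4 * (FF h p * pdw (pdw h) p - GG h p * pdw (pdu h) p) = N1 h p ∧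
      p.2 ^ 4 * (EE h p * pdw (pdw h) p - GG h p * pdu (pdu h) p) = N2 h p ∧
      p.2 ^ 3 * (EE h p * pdw (pdu h) p - FF h p * pdu (pdu h) p) = N3 h p) ∧
    ContinuousOn (N1 h) U ∧ ContinuousOn (N2 h) U ∧ ContinuousOn (N3 h) U ∧
    ((0, 0) ∈ U → h (0, 0) = 0 → pdu h (0, 0) = 0 →
      N1 h (0, 0) = -(pdw (pdu h) (0, 0)) ∧
      N2 h (0, 0) = -(pdu (pdu h) (0, 0)) ∧
      N3 h (0, 0) = 0) := by
  have hh' : ContDiffOn ℝ (0 + 1 + 1) h U := hh.of_le (by norm_num)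
  obtain ⟨rescale, hN1, hN2, hN3, endLocus⟩ := stmt_3_general hU hh'
  exact ⟨fun p hpU hp ↦ rescale p hpU hp.ne', hN1.continuousOn, hN2.continuousOn,
    hN3.continuousOn, fun h0U h0 hu0 ↦ by simpa [h0, hu0] using endLocus 0 h0U⟩
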